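/- For variables x₁,…,xₙ, the identity Σ_{λ ∈ F₀, ℓ(λ) ≤ n} (-1)^{(|λ|+r(λ))/2} s_λ(x₁,…,xₙ) = Π_i (1 - x_i) · Π_{i<j} (1 - x_i x_j) holds, where the sum is over self-conjugate partitions λ with at most n rows, s_λ is the Schur polynomial, and r(λ) is the Durfee rank of λ. -/

import Mathlib

open MvPolynomial

/-- The Durfee rank of a Young diagram: the number of diagonal boxes. -/
def durfeeRank (μ : YoungDiagram) : ℕ := (μ.cells.filter fun c => c.1 = c.2).card

/-- Complete homogeneous symmetric polynomial, extended by `0` to negative degrees. -/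
noncomputable def hPoly (n : ℕ) (k : ℤ) : MvPolynomial (Fin n) ℚ :=
  if 0 ≤ k then MvPolynomial.hsymm (Fin n) ℚ k.toNat else 0

/-- The Schur polynomial `s_μ(x₁,…,xₙ)`, defined by the Jacobi–Trudi formula
`s_μ = det (h_{μ_i - i + j})_{1 ≤ i,j ≤ n}` (valid, and used, for `μ` with at most
`n` rows). -/
noncomputable def schurPoly (n : ℕ) (μ : YoungDiagram) : MvPolynomial (Fin n) ℚ :=
  Matrix.det (Matrix.of fun i j : Fin n =>
    hPoly n ((μ.rowLen (i : ℕ) : ℤ) - ((i : ℤ) + 1) + ((j : ℤ) + 1)))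


namespace SCS
open Finset

lemma hsymm_eq_coeff (n m : ℕ) :
    PowerSeries.coeff m (∏ l : Fin n, PowerSeries.mk fun a => (X l : MvPolynomial (Fin n) ℚ) ^ a)
      = MvPolynomial.hsymm (Fin n) ℚ m := by
  rw [PowerSeries.coeff_prod, MvPolynomial.hsymm]
  symm
  refine Finset.sum_bij (fun s _ => Multiset.toFinsupp (s : Multiset (Fin n))) ?_ ?_ ?_ ?_
  · intro s _
    rw [Finset.mem_finsuppAntidiag]
    refine ⟨?_, by simp⟩
    exact (Multiset.sum_count_eq_card (s := Finset.univ) (m := (s : Multiset (Fin n)))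
      (by simp)).trans s.2
  · intro s _ t _ h
    exact Subtype.ext (Multiset.toFinsupp.injective h)
  · intro f hf
    rw [Finset.mem_finsuppAntidiag] at hf
    refine ⟨⟨Multiset.toFinsupp.symm f, ?_⟩, Finset.mem_univ _, ?_⟩
    · rw [← hf.1]
      rw [← Multiset.sum_count_eq_card (s := Finset.univ) (by simp)]
      refine Finset.sum_congr rfl fun i _ => ?_
      rw [← Multiset.toFinsupp_apply]; simp
    · simp
  · intro s _
    simp only [PowerSeries.coeff_mk, Multiset.toFinsupp_apply]
    rw [Finset.prod_multiset_map_count]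
    refine Finset.prod_subset (Finset.subset_univ _) ?_
    intro i _ hi
    rw [Multiset.mem_toFinset] at hi
    rw [Multiset.count_eq_zero_of_notMem hi, pow_zero]

/-- product of the `1 - x_l t` over `l ≠ k`. -/
noncomputable def Fk (n : ℕ) (k : Fin n) : Polynomial (MvPolynomial (Fin n) ℚ) :=
  ∏ l ∈ Finset.univ.erase k, (1 - Polynomial.C (X l) * Polynomial.X)

lemma Fk_deg (n : ℕ) (k : Fin n) : (Fk n k).natDegree < n := by
  have h1 : (Fk n k).natDegree ≤ ∑ l ∈ Finset.univ.erase k, 1 := by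
    refine (Polynomial.natDegree_prod_le _ _).trans (Finset.sum_le_sum fun l _ => ?_)
    compute_degree
  have := k.2
  simp at h1
  omega

lemma geom_mul {R : Type*} [CommRing R] (x : R) :
    (PowerSeries.mk fun a => x ^ a) * (1 - PowerSeries.C x * PowerSeries.X) = 1 := by
  ext m
  rw [mul_sub, mul_one, mul_comm, mul_assoc, map_sub, PowerSeries.coeff_C_mul]
  cases m with
  | zero => simp
  | succ m => 
    rw [PowerSeries.coeff_succ_X_mul]
    simp [PowerSeries.coeff_one, pow_succ']

lemma geom_eq (n : ℕ) (k : Fin n) :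
    (∏ l : Fin n, PowerSeries.mk fun a => (X l : MvPolynomial (Fin n) ℚ) ^ a) *
      (Fk n k : PowerSeries (MvPolynomial (Fin n) ℚ))
      = PowerSeries.mk fun a => (X k : MvPolynomial (Fin n) ℚ) ^ a := by
  rw [← Finset.mul_prod_erase _ _ (Finset.mem_univ k), mul_assoc, Fk]
  have : ((∏ l ∈ Finset.univ.erase k, (1 - Polynomial.C (X l) * Polynomial.X) :
      Polynomial (MvPolynomial (Fin n) ℚ)) : PowerSeries (MvPolynomial (Fin n) ℚ)) =
      ∏ l ∈ Finset.univ.erase k, (1 - PowerSeries.C (X l) * PowerSeries.X) := by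
    rw [← Polynomial.coeToPowerSeries.ringHom_apply, map_prod]
    refine Finset.prod_congr rfl fun l _ => ?_
    simp
  rw [this, ← Finset.prod_mul_distrib]
  simp [geom_mul]

lemma row_formula (n : ℕ) (k : Fin n) (a : ℕ) :
    ∑ m ∈ Finset.range n, hPoly n ((a : ℤ) - m) * (Fk n k).coeff m = X k ^ a := by
  have h := congrArg (PowerSeries.coeff a) (geom_eq n k)
  rw [PowerSeries.coeff_mul, PowerSeries.coeff_mk] at h
  rw [← h, ← Finset.Nat.sum_antidiagonal_swap]
  rw [Finset.Nat.sum_antidiagonal_eq_sum_range_succ_mk]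
  have e1 : ∑ m ∈ Finset.range n, hPoly n ((a : ℤ) - m) * (Fk n k).coeff m
      = ∑ m ∈ Finset.range (n + (a+1)), hPoly n ((a : ℤ) - m) * (Fk n k).coeff m := by
    refine Finset.sum_subset (Finset.range_mono (by omega)) fun m _ hm => ?_
    rw [Polynomial.coeff_eq_zero_of_natDegree_lt, mul_zero]
    have := Fk_deg n k
    simp at hm; omega
  have e2 : ∑ m ∈ Finset.range (a+1), hPoly n ((a : ℤ) - m) * (Fk n k).coeff m
      = ∑ m ∈ Finset.range (n + (a+1)), hPoly n ((a : ℤ) - m) * (Fk n k).coeff m := by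
    refine Finset.sum_subset (Finset.range_mono (by omega)) fun m _ hm => ?_
    simp at hm
    rw [hPoly, if_neg (by omega), zero_mul]
  rw [e1, ← e2]
  refine Finset.sum_congr rfl fun m hm => ?_
  simp at hm
  have : ((a : ℤ) - m) = ((a - m : ℕ) : ℤ) := by omega
  rw [this]
  simp [hPoly, hsymm_eq_coeff]

/-- the matrix `E`. -/
noncomputable def Emat (n : ℕ) : Matrix (Fin n) (Fin n) (MvPolynomial (Fin n) ℚ) :=
  Matrix.of fun j k => (Fk n k).coeff (n - 1 - j)

/-- a row of complete symmetric polynomials. -/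
noncomputable def vrow (n : ℕ) (a : ℤ) : Fin n → MvPolynomial (Fin n) ℚ :=
  fun j => hPoly n (a + j)

lemma vrow_mul (n : ℕ) (k : Fin n) (a : ℤ) (b : ℕ) (h : a + (n - 1) = b) :
    ∑ j, vrow n a j * Emat n j k = X k ^ b := by
  rw [← row_formula, ← Fin.sum_univ_eq_sum_range (fun m => hPoly n ((b : ℤ) - m) * (Fk n k).coeff m),
    ← Equiv.sum_comp Fin.revPerm]
  refine Finset.sum_congr rfl fun j _ => ?_
  have := j.2
  simp only [vrow, Emat, Fin.revPerm_apply, Fin.val_rev, Matrix.of_apply]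
  congr 2
  · rw [← h]; push_cast [Nat.cast_sub (show (j:ℕ)+1 ≤ n from j.2)]; ring
  · omega

lemma det_unitri (n : ℕ) : (Matrix.of fun i : Fin n => vrow n (-(i : ℤ))).det = 1 := by
  rw [Matrix.det_of_isUpperTriangular]
  · simp [vrow, hPoly]
  · intro i j hij
    simp only [id] at hij
    simp only [Matrix.of_apply, vrow, hPoly]
    rw [if_neg]
    have : (j : ℕ) < i := hij
    omega

lemma det_E (n : ℕ) : (Emat n).det =
    (Matrix.of fun i k : Fin n => (X k : MvPolynomial (Fin n) ℚ) ^ (n - 1 - i : ℕ)).det := by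
  rw [← one_mul (Emat n).det, ← det_unitri n, ← Matrix.det_mul]
  congr 1
  ext1 i k
  rw [Matrix.mul_apply]
  exact vrow_mul n k _ _ (by have := i.2; omega)

lemma det_B (n : ℕ) :
    (Matrix.of fun i : Fin n => vrow n (-(i : ℤ)) - vrow n (i + 1)).det *
    (Matrix.of fun i k : Fin n => (X k : MvPolynomial (Fin n) ℚ) ^ (n - 1 - i : ℕ)).det
    = (Matrix.of fun i k : Fin n => (X k : MvPolynomial (Fin n) ℚ) ^ (n - 1 - i : ℕ) -
        X k ^ (n + i : ℕ)).det := by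
  rw [← det_E, ← Matrix.det_mul]
  congr 1
  ext1 i k
  rw [Matrix.mul_apply]
  simp only [Matrix.of_apply, Pi.sub_apply, sub_mul, Finset.sum_sub_distrib]
  rw [vrow_mul n k _ (n - 1 - i : ℕ) (by have := i.2; omega), vrow_mul n k _ (n+i) (by push_cast; ring)]

/-- The polynomials expressing `x^i + ... + x^{-i}` in `x + 1/x`. -/
noncomputable def U (K : Type*) [CommRing K] : ℕ → Polynomial K
  | 0 => 1
  | 1 => Polynomial.X + 1
  | (i+2) => Polynomial.X * U K (i+1) - U K i

lemma U_spec (K : Type*) [Field K] : ∀ i, (U K i).Monic ∧ (U K i).natDegree = i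
  | 0 => by simp [U]
  | 1 => by
    simp only [U]
    exact ⟨Polynomial.monic_X_add_C 1, Polynomial.natDegree_X_add_C 1⟩
  | (i+2) => by
    obtain ⟨h1, h2⟩ := U_spec K i
    obtain ⟨h3, h4⟩ := U_spec K (i+1)
    have h5 : (Polynomial.X * U K (i+1)).Monic := Polynomial.monic_X.mul h3
    have h6 : (Polynomial.X * U K (i+1)).natDegree = i + 2 := by
      rw [Polynomial.natDegree_X_mul h3.ne_zero, h4]
    have h7 : (U K i).degree < (Polynomial.X * U K (i+1)).degree :=
      Polynomial.degree_lt_degree (by omega)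
    simp only [U]
    refine ⟨h5.sub_of_left h7, ?_⟩
    rw [Polynomial.natDegree_sub_eq_left_of_natDegree_lt (by omega), h6]

lemma U_eval {K : Type*} [Field K] (x : K) (hx : x ≠ 0) : ∀ i,
    x ^ i * (1 - x) * (U K i).eval (x + x⁻¹) = 1 - x ^ (2 * i + 1)
  | 0 => by simp [U]
  | 1 => by simp [U]; field_simp; ring
  | (i+2) => by
    have h1 := U_eval x hx i
    have h2 := U_eval x hx (i+1)
    have e : x ^ (i+2) * (1 - x) * (U K (i+2)).eval (x + x⁻¹) =
      (x^2 + 1) * (x ^ (i+1) * (1 - x) * (U K (i+1)).eval (x + x⁻¹))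
       - x^2 * (x ^ i * (1 - x) * (U K i).eval (x + x⁻¹)) := by
      simp [U]; field_simp; ring
    rw [e, h1, h2]; ring

lemma weylB {K : Type*} [Field K] (n : ℕ) (x : Fin n → K) (hx : ∀ k, x k ≠ 0) :
    (Matrix.of fun i k : Fin n => x k ^ (n - 1 - i : ℕ) - x k ^ (n + i : ℕ)).det
    = (∏ k, (1 - x k)) * (∏ i : Fin n, ∏ j ∈ Finset.Ioi i, (1 - x i * x j)) *
     (Matrix.of fun i k : Fin n => x k ^ (n - 1 - i : ℕ)).det := by
  have h1 : (Matrix.of fun i k : Fin n => x k ^ (n - 1 - i : ℕ)).det =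
      (∏ k, x k ^ (n-1)) * ∏ i : Fin n, ∏ j ∈ Finset.Ioi i, ((x j)⁻¹ - (x i)⁻¹) := by
    rw [← Matrix.det_vandermonde, ← Matrix.det_mul_column, ← Matrix.det_transpose]
    congr 1
    ext k i
    have := i.2
    simp only [Matrix.transpose_apply, Matrix.of_apply, Matrix.vandermonde_apply]
    rw [inv_pow, ← div_eq_mul_inv, eq_div_iff (pow_ne_zero _ (hx _)), ← pow_add]
    congr 1; omega
  have h2 : (Matrix.of fun i k : Fin n => x k ^ (n - 1 - i : ℕ) - x k ^ (n + i : ℕ)).det =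
      (∏ k, ((1 - x k) * x k ^ (n-1))) *
        ∏ i : Fin n, ∏ j ∈ Finset.Ioi i, ((x j + (x j)⁻¹) - (x i + (x i)⁻¹)) := by
    rw [← Matrix.det_vandermonde (fun i => x i + (x i)⁻¹),
      Matrix.det_eval_matrixOfPolynomials_eq_det_vandermonde _ (fun i : Fin n => U K i)
        (fun i => (U_spec K i).2) (fun i => (U_spec K i).1),
      ← Matrix.det_mul_column, ← Matrix.det_transpose]
    congr 1
    ext k i
    have hi := i.2
    simp only [Matrix.transpose_apply, Matrix.of_apply]
    have e := U_eval (x k) (hx k) i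
    have e1 : x k ^ (n-1) = x k ^ (n - 1 - i : ℕ) * x k ^ (i : ℕ) := by
      rw [← pow_add]; congr 1; omega
    have e2 : x k ^ (n + i : ℕ) = x k ^ (n - 1 - i : ℕ) * x k ^ (2 * i + 1 : ℕ) := by
      rw [← pow_add]; congr 1; omega
    rw [e1, e2]
    linear_combination (-x k ^ (n - 1 - i : ℕ)) * e
  rw [h1, h2, Finset.prod_mul_distrib]
  have h3 : ∏ i : Fin n, ∏ j ∈ Finset.Ioi i, ((x j + (x j)⁻¹) - (x i + (x i)⁻¹)) =
    (∏ i : Fin n, ∏ j ∈ Finset.Ioi i, (1 - x i * x j)) *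
      ∏ i : Fin n, ∏ j ∈ Finset.Ioi i, ((x j)⁻¹ - (x i)⁻¹) := by
    rw [← Finset.prod_mul_distrib]
    refine Finset.prod_congr rfl fun i _ => ?_
    rw [← Finset.prod_mul_distrib]
    refine Finset.prod_congr rfl fun j _ => ?_
    have := hx i
    have := hx j
    field_simp
    ring
  rw [h3]; ring

lemma vdm_ne {K : Type*} [Field K] (n : ℕ) (x : Fin n → K) (hx : ∀ k, x k ≠ 0)
    (hinj : Function.Injective x) :
     (Matrix.of fun i k : Fin n => x k ^ (n - 1 - i : ℕ)).det ≠ 0 := by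
  have h1 : (Matrix.of fun i k : Fin n => x k ^ (n - 1 - i : ℕ)).det =
      (∏ k, x k ^ (n-1)) * (Matrix.vandermonde fun i => (x i)⁻¹).det := by
    rw [← Matrix.det_mul_column, ← Matrix.det_transpose]
    congr 1
    ext k i
    have := i.2
    simp only [Matrix.transpose_apply, Matrix.of_apply, Matrix.vandermonde_apply]
    rw [inv_pow, ← div_eq_mul_inv, eq_div_iff (pow_ne_zero _ (hx _)), ← pow_add]
    congr 1; omega
  rw [h1]
  refine mul_ne_zero (Finset.prod_ne_zero_iff.2 fun k _ => pow_ne_zero _ (hx k)) ?_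
  rw [Matrix.det_vandermonde_ne_zero_iff]
  exact inv_injective.comp hinj

lemma det_h (n : ℕ) :
    (Matrix.of fun i : Fin n => vrow n (-(i : ℤ)) - vrow n (i + 1)).det =
    (∏ i : Fin n, (1 - X i)) *
        ∏ p ∈ Finset.univ.filter (fun p : Fin n × Fin n => p.1 < p.2),
          (1 - X p.1 * X p.2) := by
  have hprod : ∏ p ∈ Finset.univ.filter (fun p : Fin n × Fin n => p.1 < p.2),
          (1 - X p.1 * X p.2 : MvPolynomial (Fin n) ℚ) =
        ∏ i : Fin n, ∏ j ∈ Finset.Ioi i, (1 - X i * X j) := by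
    rw [Finset.prod_sigma']
    refine Finset.prod_bij' (fun p _ => ⟨p.1, p.2⟩) (fun p _ => (p.1, p.2)) ?_ ?_ ?_ ?_ ?_ <;> simp
  rw [hprod]
  let K := FractionRing (MvPolynomial (Fin n) ℚ)
  let φ : MvPolynomial (Fin n) ℚ →+* K := algebraMap _ _
  have hφ : Function.Injective φ := IsFractionRing.injective _ _
  have hx : ∀ k : Fin n, φ (X k) ≠ 0 := fun k => by
    rw [Ne, map_eq_zero_iff φ hφ]; exact X_ne_zero k
  have hinj : Function.Injective fun k : Fin n => φ (X k) :=
    hφ.comp (MvPolynomial.X_injective)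
  apply hφ
  apply mul_right_cancel₀ (vdm_ne n _ hx hinj)
  have hB := congrArg φ (det_B n)
  have hw := weylB n _ hx
  have e : (Matrix.of fun i k : Fin n => φ (X k) ^ (n - 1 - i : ℕ)).det =
      φ (Matrix.of fun i k : Fin n => (X k : MvPolynomial (Fin n) ℚ) ^ (n - 1 - i : ℕ)).det := by
    rw [RingHom.map_det]; congr 1; ext i k; simp
  have e2 : (Matrix.of fun i k : Fin n => φ (X k) ^ (n - 1 - i : ℕ) - φ (X k) ^ (n + i : ℕ)).det =
      φ (Matrix.of fun i k : Fin n => (X k : MvPolynomial (Fin n) ℚ) ^ (n - 1 - i : ℕ) -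
        X k ^ (n + i : ℕ)).det := by
    rw [RingHom.map_det]; congr 1; ext i k; simp
  rw [map_mul, ← e] at hB
  rw [hB, ← e2, hw]
  simp only [map_mul, map_prod, map_sub, map_one]

/-- abstract row-length function of a self-conjugate partition with at most `n` rows. -/
structure SC (n : ℕ) (f : ℕ → ℕ) : Prop where
  anti : ∀ i j, i ≤ j → f j ≤ f i
  symm : ∀ i j, j < f i ↔ i < f j
  le : f 0 ≤ n

lemma SC.le' {n f} (h : SC n f) (i : ℕ) : f i ≤ n := (h.anti 0 i (Nat.zero_le _)).trans h.le

lemma SC.lt {n f} (h : SC n f) (i : ℕ) (hi : 0 < f i) : i < n :=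
  ((h.symm i 0).1 hi).trans_le h.le

lemma SC.key {n f} (h : SC n f) (i j : ℕ) : f i + f j ≠ i + j + 1 := by
  have := h.symm i j
  omega

/-- the sorting permutation, as a function. -/
def sg (f : ℕ → ℕ) (i : ℕ) : ℕ := if i < f i then f i - i - 1 else i - f i

lemma sg_lt {n f} (h : SC n f) (i : ℕ) (hi : i < n) : sg f i < n := by
  have := h.le' i
  unfold sg; split_ifs <;> omega

lemma sg_inj {n f} (h : SC n f) (i j : ℕ) (hij : sg f i = sg f j) : i = j := by
  have h1 := h.key i j
  have h2 := h.anti i j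
  have h3 := h.anti j i
  unfold sg at hij
  split_ifs at hij <;> omega

/-- the sorting permutation. -/
noncomputable def sp {n f} (h : SC n f) : Equiv.Perm (Fin n) :=
  Equiv.ofBijective (fun i => (⟨sg f i, sg_lt h i i.2⟩ : Fin n))
    (Finite.injective_iff_bijective.1 fun i j hij => by
      apply Fin.ext
      exact sg_inj h i j (by simpa using hij))

lemma sp_val {n f} (h : SC n f) (i : Fin n) : ((sp h i : Fin n) : ℕ) = sg f i := rfl

lemma sp_sign {n f} (h : SC n f) :
    (Equiv.Perm.sign (sp h)) =
      ∏ i : Fin n, if (i : ℕ) < f i then (-1 : ℤˣ) ^ (f i - i - 1) else 1 := by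
  rw [Equiv.Perm.sign_eq_prod_prod_Ioi]
  refine Finset.prod_congr rfl fun i _ => ?_
  split_ifs with hi
  · rw [Finset.prod_ite, Finset.prod_const_one, one_mul, Finset.prod_const]
    congr 1
    have e : (Finset.Ioi i).filter (fun j => ¬ sp h i < sp h j)
        = (Finset.Iio (sp h i)).map (sp h).symm.toEmbedding := by
      ext j
      simp only [Finset.mem_filter, Finset.mem_Ioi, Finset.mem_map_equiv, Equiv.symm_symm,
        Finset.mem_Iio, Fin.lt_def, sp_val]
      have h1 := sg_inj h i j
      have h2 := h.anti j i
      constructor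
      · rintro ⟨h3, h4⟩
        omega
      · intro h3
        refine ⟨?_, by omega⟩
        by_contra h4
        have h5 := h2 (by omega)
        unfold sg at h3
        split_ifs at h3 <;> omega
    rw [e, Finset.card_map, Fin.card_Iio, sp_val, sg, if_pos hi]
  · refine Finset.prod_eq_one fun j hj => if_pos ?_
    rw [Finset.mem_Ioi, Fin.lt_def] at hj
    have h2 := h.anti i j
    rw [Fin.lt_def, sp_val, sp_val]
    unfold sg
    split_ifs <;> omega

open Classical in
/-- the set of arm lengths of diagonal boxes. -/
noncomputable def Sof (n : ℕ) (f : ℕ → ℕ) : Finset (Fin n) :=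
  Finset.univ.filter fun s => ∃ i, f i = i + 1 + s

lemma mem_Sof {n f} (s : Fin n) : s ∈ Sof n f ↔ ∃ i, f i = i + 1 + s := by simp [Sof]

lemma sp_mem_Sof {n f} (h : SC n f) (i : Fin n) : sp h i ∈ Sof n f ↔ (i : ℕ) < f i := by
  rw [mem_Sof, sp_val]
  constructor
  · rintro ⟨j, hj⟩
    by_contra hi
    rw [sg, if_neg hi] at hj
    have := h.key i j
    omega
  · intro hi
    refine ⟨i, ?_⟩
    rw [sg, if_pos hi]; omega

lemma det_term {n f} (h : SC n f) :
    Matrix.detRowAlternating ((Sof n f).piecewise (fun i : Fin n => - vrow n (i + 1))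
        (fun i : Fin n => vrow n (-(i : ℤ)))) =
      (-1) ^ (∑ i : Fin n, (f i - i)) *
        (Matrix.of fun i : Fin n => vrow n ((f i : ℤ) - i)).det := by
  set M : Matrix (Fin n) (Fin n) (MvPolynomial (Fin n) ℚ) :=
    Matrix.of ((Sof n f).piecewise (fun i : Fin n => - vrow n (i + 1))
        (fun i : Fin n => vrow n (-(i : ℤ)))) with hM
  change M.det = _
  have h1 := Matrix.det_permute (sp h) M
  have h2 : M.submatrix (sp h) id = Matrix.of fun i j : Fin n =>
      (if (i : ℕ) < f i then (-1) else 1 : MvPolynomial (Fin n) ℚ) *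
        (Matrix.of fun i : Fin n => vrow n ((f i : ℤ) - i)) i j := by
    ext1 i j
    simp only [Matrix.submatrix_apply, id, Matrix.of_apply, hM, Finset.piecewise, sp_mem_Sof, sp_val]
    by_cases hi : (i : ℕ) < f i
    · rw [if_pos hi, if_pos hi]
      have : ((sg f i : ℕ) : ℤ) + 1 = f i - i := by rw [sg, if_pos hi]; omega
      rw [this]; simp
    · rw [if_neg hi, if_neg hi]
      have : -((sg f i : ℕ) : ℤ) = f i - i := by rw [sg, if_neg hi]; omega
      rw [this]; simp
  rw [h2, Matrix.det_mul_column] at h1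
  have h3 : (((Equiv.Perm.sign (sp h) : ℤˣ) : ℤ) : MvPolynomial (Fin n) ℚ) =
      ∏ i : Fin n, if (i : ℕ) < f i then (-1) ^ (f i - i - 1) else 1 := by
    rw [sp_sign, Units.coe_prod, Int.cast_prod]
    refine Finset.prod_congr rfl fun i _ => ?_
    split_ifs <;> simp
  rw [h3] at h1
  have h4 : (-1 : MvPolynomial (Fin n) ℚ) ^ (∑ i : Fin n, (f i - i)) =
      (∏ i : Fin n, if (i : ℕ) < f i then (-1) ^ (f i - i - 1) else 1) *
      (∏ i : Fin n, if (i : ℕ) < f i then (-1) else 1 : MvPolynomial (Fin n) ℚ) := by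
    rw [← Finset.prod_pow_eq_pow_sum, ← Finset.prod_mul_distrib]
    refine Finset.prod_congr rfl fun i _ => ?_
    split_ifs with hi
    · rw [← pow_succ]; congr 1; omega
    · rw [show f i - i = 0 by omega]; simp
  rw [h4, mul_assoc, h1, ← mul_assoc, ← Finset.prod_mul_distrib]
  rw [Finset.prod_eq_one, one_mul]
  intro i _
  split_ifs
  · rw [← mul_pow]; simp
  · simp

lemma SC_of {n : ℕ} {μ : YoungDiagram} (h : μ.transpose = μ ∧ μ.colLen 0 ≤ n) : SC n μ.rowLen := by
  have e : ∀ i, μ.colLen i = μ.rowLen i := fun i => by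
    conv_lhs => rw [← h.1]
    exact μ.colLen_transpose i
  refine ⟨fun i j => μ.rowLen_anti i j, fun i j => ?_, by rw [← e]; exact h.2⟩
  rw [← YoungDiagram.mem_iff_lt_rowLen, YoungDiagram.mem_iff_lt_colLen, e]

lemma swap_mem {μ : YoungDiagram} (h : μ.transpose = μ) (i j : ℕ) : (i, j) ∈ μ ↔ (j, i) ∈ μ := by
  conv_lhs => rw [← h]
  rw [YoungDiagram.mem_transpose]; rfl

lemma expo {n : ℕ} {μ : YoungDiagram} (h : μ.transpose = μ ∧ μ.colLen 0 ≤ n) :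
    (μ.cells.card + durfeeRank μ) / 2 = ∑ i : Fin n, (μ.rowLen i - i) := by
  have hs := SC_of h
  rw [Fin.sum_univ_eq_sum_range (fun i => μ.rowLen i - i)]
  have hA : (μ.cells.filter fun c => c.1 ≤ c.2).card = ∑ i ∈ Finset.range n, (μ.rowLen i - i) := by
    rw [Finset.card_eq_sum_card_fiberwise (f := Prod.fst) (t := Finset.range n)]
    · refine Finset.sum_congr rfl fun i _ => ?_
      rw [← Nat.card_Ico]
      refine (Finset.card_bij (fun j _ => (i, j)) ?_ ?_ ?_).symm
      · intro j hj
        rw [Finset.mem_Ico] at hj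
        simp [YoungDiagram.mem_iff_lt_rowLen, hj]
      · intro a _ b _ hab
        simpa using hab
      · rintro ⟨a, b⟩ hab
        simp [YoungDiagram.mem_iff_lt_rowLen] at hab
        obtain ⟨⟨h1, h2⟩, rfl⟩ := hab
        exact ⟨b, by simp [h1, h2], rfl⟩
    · rintro ⟨a, b⟩ hab
      simp [YoungDiagram.mem_iff_lt_rowLen] at hab
      simpa using hs.lt a (by omega)
  have hB : (μ.cells.filter fun c => c.2 ≤ c.1).card = (μ.cells.filter fun c => c.1 ≤ c.2).card := by
    refine Finset.card_bij (fun c _ => c.swap) ?_ ?_ ?_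
    · rintro ⟨a, b⟩ hab
      simp at hab ⊢
      exact ⟨(swap_mem h.1 _ _).1 hab.1, hab.2⟩
    · intro a _ b _ hab
      exact Prod.swap_injective hab
    · rintro ⟨a, b⟩ hab
      simp at hab
      exact ⟨(b, a), by simpa using ⟨(swap_mem h.1 _ _).1 hab.1, hab.2⟩, rfl⟩
  have hU := Finset.card_union_add_card_inter (μ.cells.filter fun c => c.1 ≤ c.2)
    (μ.cells.filter fun c => c.2 ≤ c.1)
  have e1 : (μ.cells.filter fun c => c.1 ≤ c.2) ∪ (μ.cells.filter fun c => c.2 ≤ c.1) = μ.cells := by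
    ext c
    have := le_total c.1 c.2
    simp only [Finset.mem_union, Finset.mem_filter]; tauto
  have e2 : (μ.cells.filter fun c => c.1 ≤ c.2) ∩ (μ.cells.filter fun c => c.2 ≤ c.1) =
      μ.cells.filter fun c => c.1 = c.2 := by
    ext c
    simp only [Finset.mem_inter, Finset.mem_filter, le_antisymm_iff]; tauto
  rw [e1, e2, hB, hA] at hU
  rw [durfeeRank, hU]; omega

/-- number of elements of `S` which are at least `d`. -/
def G {n : ℕ} (S : Finset (Fin n)) (d : ℕ) : ℕ := (S.filter fun s : Fin n => d ≤ (s : ℕ)).card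

lemma G_anti {n : ℕ} (S : Finset (Fin n)) {d e : ℕ} (h : d ≤ e) : G S e ≤ G S d :=
  Finset.card_le_card fun s hs => by
    simp only [Finset.mem_filter] at hs ⊢
    exact ⟨hs.1, h.trans hs.2⟩

lemma G_succ {n : ℕ} (S : Finset (Fin n)) (d : ℕ) :
    G S d = G S (d + 1) + (S.filter fun s : Fin n => (s : ℕ) = d).card := by
  rw [G, G, ← Finset.card_union_of_disjoint]
  · congr 1
    ext s
    simp only [Finset.mem_filter, Finset.mem_union]
    have : d ≤ (s : ℕ) ↔ d + 1 ≤ (s : ℕ) ∨ (s : ℕ) = d := by omega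
    tauto
  · rw [Finset.disjoint_filter]
    intro s _ h1 h2
    omega

lemma G_succ_le {n : ℕ} (S : Finset (Fin n)) (d : ℕ) : G S d ≤ G S (d + 1) + 1 := by
  rw [G_succ]
  have : (S.filter fun s : Fin n => (s : ℕ) = d).card ≤ 1 := by
    rw [Finset.card_le_one]
    intro a ha b hb
    simp only [Finset.mem_filter] at ha hb
    exact Fin.ext (ha.2.trans hb.2.symm)
  omega

lemma G_add_le {n : ℕ} (S : Finset (Fin n)) (d e : ℕ) : G S d ≤ G S (d + e) + e := by
  induction e with
  | zero => simp
  | succ e ih =>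
    have := G_succ_le S (d + e)
    rw [show d + (e + 1) = d + e + 1 by omega]; omega

lemma G_mem {n : ℕ} (S : Finset (Fin n)) (s : Fin n) : s ∈ S ↔ G S (s + 1) < G S s := by
  rw [G_succ S s]
  have : 0 < (S.filter fun t : Fin n => (t : ℕ) = s).card ↔ s ∈ S := by
    rw [Finset.card_pos]
    constructor
    · rintro ⟨t, ht⟩
      simp only [Finset.mem_filter] at ht
      rw [← Fin.ext ht.2]; exact ht.1
    · intro h
      exact ⟨s, by simp [h]⟩
  rw [← this]; omega

lemma G_le {n : ℕ} (S : Finset (Fin n)) (d : ℕ) : G S d ≤ n - d := by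
  rw [← Nat.card_Ico, G]
  refine Finset.card_le_card_of_injOn (fun s => (s : ℕ)) ?_ ?_
  · intro s hs
    simp only [Finset.coe_filter, Set.mem_ofPred_eq] at hs
    simp [hs.2]
  · intro a _ b _ hab
    exact Fin.ext hab

/-- the self-conjugate diagram with prescribed arm lengths. -/
def muOf {n : ℕ} (S : Finset (Fin n)) : YoungDiagram where
  cells := (Finset.range n ×ˢ Finset.range n).filter fun c =>
    min c.1 c.2 < G S (max c.1 c.2 - min c.1 c.2)
  isLowerSet := by
    rintro ⟨i, j⟩ ⟨i', j'⟩ hle hm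
    simp only [Prod.mk_le_mk] at hle
    simp only [Finset.coe_filter, Finset.mem_product, Finset.mem_range, Set.mem_ofPred_eq] at hm ⊢
    refine ⟨by omega, ?_⟩
    rcases le_total (max i' j' - min i' j') (max i j - min i j) with h | h
    · have := G_anti S h
      omega
    · obtain ⟨e, he⟩ := Nat.exists_eq_add_of_le h
      have := G_add_le S (max i j - min i j) e
      rw [← he] at this
      omega

lemma mem_muOf {n : ℕ} (S : Finset (Fin n)) (i j : ℕ) :
    (i, j) ∈ muOf S ↔ min i j < G S (max i j - min i j) := by
  rw [← YoungDiagram.mem_cells, muOf]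
  simp only [Finset.mem_filter, Finset.mem_product, Finset.mem_range, and_iff_right_iff_imp]
  have := G_le S (max i j - min i j)
  omega

lemma muOf_prop {n : ℕ} (S : Finset (Fin n)) :
    (muOf S).transpose = muOf S ∧ (muOf S).colLen 0 ≤ n := by
  constructor
  · ext ⟨i, j⟩
    rw [YoungDiagram.mem_cells, YoungDiagram.mem_cells, YoungDiagram.mem_transpose,
      Prod.swap_prod_mk, mem_muOf, mem_muOf, min_comm, max_comm]
  · rw [← not_lt, ← YoungDiagram.mem_iff_lt_colLen, mem_muOf]
    have := G_le S n
    simp; omega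

lemma Sof_muOf {n : ℕ} (S : Finset (Fin n)) : Sof n (muOf S).rowLen = S := by
  ext s
  rw [mem_Sof, G_mem]
  have key : ∀ i, (muOf S).rowLen i = i + 1 + s ↔ G S (s + 1) ≤ i ∧ i < G S s := by
    intro i
    have h1 := mem_muOf S i (i + s)
    have h2 := mem_muOf S i (i + (s + 1))
    rw [YoungDiagram.mem_iff_lt_rowLen, min_eq_left (by omega), max_eq_right (by omega),
      Nat.add_sub_cancel_left] at h1 h2
    omega
  simp only [key]
  constructor
  · rintro ⟨i, hi⟩; omega
  · intro h; exact ⟨_, le_rfl, h⟩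

lemma G_Sof {n f} (h : SC n f) (d i : ℕ) : i < G (Sof n f) d ↔ i + d < f i := by
  have hc : G (Sof n f) d = ((Finset.range n).filter fun i => i + d < f i).card := by
    symm
    refine Finset.card_bij (fun i hi => (⟨f i - i - 1, ?_⟩ : Fin n)) ?_ ?_ ?_
    · have := h.le' i
      simp only [Finset.mem_filter, Finset.mem_range] at hi
      omega
    · intro i hi
      simp only [Finset.mem_filter, Finset.mem_range] at hi ⊢
      refine ⟨(mem_Sof _).2 ⟨i, ?_⟩, ?_⟩
      · simp only; omega
      · omega
    · intro i hi j hj hij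
      simp only [Finset.mem_filter, Finset.mem_range, Fin.mk.injEq] at hi hj hij
      have h2 := h.anti i j
      have h3 := h.anti j i
      omega
    · intro s hs
      simp only [Finset.mem_filter, mem_Sof] at hs
      obtain ⟨⟨i, hi⟩, hd⟩ := hs
      refine ⟨i, ?_, Fin.ext ?_⟩
      · simp only [Finset.mem_filter, Finset.mem_range]
        exact ⟨h.lt i (by omega), by omega⟩
      · simp only; omega
  rw [hc]
  constructor
  · intro hi
    by_contra hn
    have : ((Finset.range n).filter fun i => i + d < f i) ⊆ Finset.range i := by
      intro j hj
      simp only [Finset.mem_filter, Finset.mem_range] at hj ⊢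
      have := h.anti i j
      omega
    have := Finset.card_le_card this
    rw [Finset.card_range] at this
    omega
  · intro hi
    have : Finset.range (i + 1) ⊆ ((Finset.range n).filter fun i => i + d < f i) := by
      intro j hj
      simp only [Finset.mem_filter, Finset.mem_range] at hj ⊢
      have := h.anti j i
      exact ⟨h.lt j (by omega), by omega⟩
    have := Finset.card_le_card this
    rw [Finset.card_range] at this
    omega

lemma muOf_Sof {n : ℕ} {μ : YoungDiagram} (h : μ.transpose = μ ∧ μ.colLen 0 ≤ n) :
    muOf (Sof n μ.rowLen) = μ := by
  have hs := SC_of h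
  ext ⟨i, j⟩
  rw [YoungDiagram.mem_cells, YoungDiagram.mem_cells, mem_muOf, G_Sof hs]
  rcases le_total i j with hij | hij
  · rw [min_eq_left hij, max_eq_right hij, YoungDiagram.mem_iff_lt_rowLen, Nat.add_sub_cancel' hij]
  · rw [min_eq_right hij, max_eq_left hij, swap_mem h.1, YoungDiagram.mem_iff_lt_rowLen,
      Nat.add_sub_cancel' hij]

end SCS

/-- `Σ_{λ ∈ F₀, ℓ(λ) ≤ n} (-1)^{(|λ|+r(λ))/2} s_λ(x) = Π_i (1-x_i) Π_{i<j} (1-x_i x_j)`,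
the sum running over self-conjugate partitions with at most `n` rows. -/
theorem selfConjugate_schur_sum (n : ℕ) :
    (∑ᶠ (μ : YoungDiagram) (_ : μ.transpose = μ ∧ μ.colLen 0 ≤ n),
        ((-1 : ℚ) ^ ((μ.cells.card + durfeeRank μ) / 2)) • schurPoly n μ)
      = (∏ i : Fin n, (1 - X i)) *
        ∏ p ∈ Finset.univ.filter (fun p : Fin n × Fin n => p.1 < p.2),
          (1 - X p.1 * X p.2) := by
  rw [← SCS.det_h]
  have e0 : (Matrix.of fun i : Fin n => SCS.vrow n (-(i : ℤ)) - SCS.vrow n (i + 1)).det =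
      Matrix.detRowAlternating ((fun i : Fin n => - SCS.vrow n (i + 1)) +
        (fun i : Fin n => SCS.vrow n (-(i : ℤ)))) := by
    change Matrix.det _ = Matrix.det _
    congr 1
    ext1 i j
    simp [sub_eq_neg_add]
  rw [e0, AlternatingMap.map_add_univ]
  rw [← finsum_eq_sum_of_fintype]
  refine Eq.trans ?_ (finsum_mem_univ _)
  refine finsum_mem_eq_of_bijOn (M := MvPolynomial (Fin n) ℚ)
    (f := fun μ => ((-1 : ℚ) ^ ((μ.cells.card + durfeeRank μ) / 2)) • schurPoly n μ)
    (g := fun S => Matrix.detRowAlternating (S.piecewise (fun i : Fin n => - SCS.vrow n (i + 1))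
        (fun i : Fin n => SCS.vrow n (-(i : ℤ))))) (s := {μ : YoungDiagram | μ.transpose = μ ∧ μ.colLen 0 ≤ n})
    (fun μ => SCS.Sof n μ.rowLen) ⟨fun _ _ => Set.mem_univ _, ?_, ?_⟩ ?_
  · intro μ hμ ν hν h
    rw [← SCS.muOf_Sof hμ, ← SCS.muOf_Sof hν]
    exact congrArg SCS.muOf h
  · intro S _
    exact ⟨SCS.muOf S, SCS.muOf_prop S, SCS.Sof_muOf S⟩
  · intro μ hμ
    rw [SCS.det_term (SCS.SC_of hμ), ← SCS.expo hμ, MvPolynomial.smul_eq_C_mul, schurPoly]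
    congr 1
    · simp
    · congr 1
      ext1 i j
      simp only [Matrix.of_apply, SCS.vrow]
      congr 1
      ring
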